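/- (Characterization of the global K-consequences of the formula φ := (q → p) ∧ (p → □p) ∧ (p → r).) Let p, q, r be distinct propositional variables and φ := (q → p) ∧ (p → □p) ∧ (p → r). For every modal formula θ whose variables are among {q, r}: φ ⊢_K θ if and only if there exists N ≥ 0 such that ⋀_{k=0}^{N} (q → □^k r) ⊢_K θ. -/

import Mathlib

/-!
Write `φ` for `phiK p q r`. In a model of `φ` the set of `p`-worlds contains the `q`-worlds, is closed under
successors and lies inside the `r`-worlds. So `q → □^k r` holds for every `k`; conversely, in a
model of all the formulas `q → □^k r`, letting `p` hold at the worlds reachable from a `q`-world gives a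
model of `phiK p q r`, and this does not affect formulas without `p` (`forces_congr`).

Hence if `φ ⊢ θ`, then `θ` follows from the infinite set of all `q → □^k r`, and what remains is
compactness of global consequence. If for every `N` some model of `chainForm q r N` refutes `θ`,
then a nonprincipal ultraproduct of these models (`forces_ultraProd`, the modal form of Łoś's
theorem) satisfies all `q → □^k r` and still refutes `θ`.
-/

/-- Modal formulas over variables indexed by `ℕ`. -/
inductive MForm : Type
  | var : ℕ → MForm
  | bot : MForm
  | and : MForm → MForm → MForm
  | imp : MForm → MForm → MForm
  | box : MForm → MForm

/-- The set of propositional variables occurring in a modal formula. -/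
def MForm.vars : MForm → Finset ℕ
  | .var p => {p}
  | .bot => ∅
  | .and a b => a.vars ∪ b.vars
  | .imp a b => a.vars ∪ b.vars
  | .box a => a.vars

/-- The k-fold iterate □^k of the box modality. -/
def boxIter : ℕ → MForm → MForm
  | 0, a => a
  | n + 1, a => .box (boxIter n a)

/-- A Kripke model for modal logic. -/
structure MModel where
  W : Type
  R : W → W → Prop
  val : ℕ → W → Prop

/-- The (classical) modal forcing relation. -/
def MModel.Forces (M : MModel) : M.W → MForm → Prop
  | w, .var p => M.val p w
  | _, .bot => False
  | w, .and a b => M.Forces w a ∧ M.Forces w b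
  | w, .imp a b => M.Forces w a → M.Forces w b
  | w, .box a => ∀ v, M.R w v → M.Forces v a

/-- The global consequence relation of the modal logic K. -/
def GlobalK (φ θ : MForm) : Prop :=
  ∀ M : MModel, (∀ w, M.Forces w φ) → ∀ w, M.Forces w θ

/-- The conjunction ⋀_{k=0}^{N} (q → □^k r). -/
def chainForm (q r : ℕ) : ℕ → MForm
  | 0 => .imp (.var q) (.var r)
  | N + 1 => .and (chainForm q r N) (.imp (.var q) (boxIter (N + 1) (.var r)))

/-- The formula φ := (q → p) ∧ (p → □p) ∧ (p → r). -/
def phiK (p q r : ℕ) : MForm :=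
  .and (.and (.imp (.var q) (.var p)) (.imp (.var p) (.box (.var p))))
    (.imp (.var p) (.var r))

/-- The model with the same frame, in which the variable `p` is interpreted as the set of worlds
reachable in finitely many (possibly zero) steps from a world satisfying `q`. -/
def MModel.reach (M : MModel) (p q : ℕ) : MModel where
  W := M.W
  R := M.R
  val i w := if i = p then ∃ v, M.val q v ∧ Relation.ReflTransGen M.R v w else M.val i w

/-- The ultraproduct of a sequence of models. Its worlds are the sequences of worlds themselves:
dividing by almost-everywhere equality would not change which formulas are forced. -/
def ultraProd (U : Ultrafilter ℕ) (M : ℕ → MModel) : MModel where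
  W := ∀ n, (M n).W
  R f g := ∀ᶠ n in (U : Filter ℕ), (M n).R (f n) (g n)
  val i f := ∀ᶠ n in (U : Filter ℕ), (M n).val i (f n)

theorem forces_ultraProd (U : Ultrafilter ℕ) (M : ℕ → MModel) (θ : MForm) :
    ∀ f : (ultraProd U M).W,
      (ultraProd U M).Forces f θ ↔ ∀ᶠ n in (U : Filter ℕ), (M n).Forces (f n) θ := by
  classical
  induction θ with
  | var i => exact fun f => Iff.rfl
  | bot => intro f; simp [MModel.Forces, U.neBot.ne]
  | and a b iha ihb =>
    intro f
    simp only [MModel.Forces, iha, ihb, Filter.eventually_and]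
  | imp a b iha ihb =>
    intro f
    simp only [MModel.Forces, iha, ihb, Ultrafilter.eventually_imp]
  | box a iha =>
    intro f
    simp only [MModel.Forces, iha]
    constructor
    · intro h
      by_contra hc
      rw [← Ultrafilter.eventually_not] at hc
      -- A successor refuting `a` wherever one exists; the value elsewhere is irrelevant.
      have hex : ∀ n, ∃ v, (¬ ∀ v, (M n).R (f n) v → (M n).Forces v a) →
          (M n).R (f n) v ∧ ¬ (M n).Forces v a := by
        intro n
        by_cases hn : ∀ v, (M n).R (f n) v → (M n).Forces v a
        · exact ⟨f n, fun h' => absurd hn h'⟩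
        · push Not at hn
          obtain ⟨v, hv⟩ := hn
          exact ⟨v, fun _ => hv⟩
      choose g hg using hex
      have h1 := h g (hc.mono fun n hn => (hg n hn).1)
      obtain ⟨n, hn1, hn2⟩ := (h1.and hc).exists
      exact (hg n hn2).2 hn1
    · intro h g hR
      filter_upwards [h, hR] with n hn hr using hn _ hr

theorem forces_congr (M : MModel) (p q : ℕ) (θ : MForm) (hp : p ∉ θ.vars) :
    ∀ w : M.W, (M.reach p q).Forces w θ ↔ M.Forces w θ := by
  induction θ with
  | var i =>
    intro w
    have hi : i ≠ p := by
      rintro rfl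
      simp [MForm.vars] at hp
    simp [MModel.Forces, MModel.reach, hi]
  | bot => exact fun w => Iff.rfl
  | and a b iha ihb =>
    simp only [MForm.vars, Finset.mem_union, not_or] at hp
    exact fun w => and_congr (iha hp.1 w) (ihb hp.2 w)
  | imp a b iha ihb =>
    simp only [MForm.vars, Finset.mem_union, not_or] at hp
    exact fun w => imp_congr (iha hp.1 w) (ihb hp.2 w)
  | box a iha =>
    exact fun w => forall_congr' fun v => imp_congr Iff.rfl (iha hp v)

theorem forces_chainForm (M : MModel) (q r N : ℕ) (w : M.W) :
    M.Forces w (chainForm q r N) ↔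
      ∀ k ≤ N, M.val q w → M.Forces w (boxIter k (.var r)) := by
  induction N with
  | zero => simp [chainForm, MModel.Forces, boxIter]
  | succ N ih =>
    simp only [chainForm, MModel.Forces, ih, Nat.le_succ_iff]
    constructor
    · rintro ⟨h1, h2⟩ k (hk | rfl)
      · exact h1 k hk
      · exact h2
    · exact fun h => ⟨fun k hk => h k (.inl hk), h _ (.inr rfl)⟩

theorem forces_of_reachable (M : MModel) (a : MForm) {v w : M.W}
    (hvw : Relation.ReflTransGen M.R v w) :
    (∀ k, M.Forces v (boxIter k a)) → M.Forces w a := by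
  induction hvw using Relation.ReflTransGen.head_induction_on with
  | refl => exact fun h => h 0
  | head hR _ ih => exact fun h => ih fun k => h (k + 1) _ hR

theorem forces_phiK_reach (M : MModel) {p q r : ℕ} (hpq : p ≠ q) (hpr : p ≠ r)
    (h : ∀ k, ∀ w, M.val q w → M.Forces w (boxIter k (.var r))) (w : M.W) :
    (M.reach p q).Forces w (phiK p q r) := by
  have hp : ∀ w : M.W, (M.reach p q).val p w ↔
      ∃ v, M.val q v ∧ Relation.ReflTransGen M.R v w := fun w => by simp [MModel.reach]
  have hq : ∀ w : M.W, (M.reach p q).val q w ↔ M.val q w :=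
    fun w => by simp [MModel.reach, hpq.symm]
  have hr : ∀ w : M.W, (M.reach p q).val r w ↔ M.val r w :=
    fun w => by simp [MModel.reach, hpr.symm]
  refine ⟨⟨fun hw => ?_, fun hw u hu => ?_⟩, fun hw => ?_⟩
  · exact (hp w).2 ⟨w, (hq w).1 hw, .refl⟩
  · obtain ⟨v, hv, hvw⟩ := (hp w).1 hw
    exact (hp u).2 ⟨v, hv, hvw.tail hu⟩
  · obtain ⟨v, hv, hvw⟩ := (hp w).1 hw
    exact (hr w).2 (forces_of_reachable M (.var r) hvw fun k => h k v hv)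

theorem forces_boxIter_of_phiK (M : MModel) {p q r : ℕ}
    (h : ∀ w, M.Forces w (phiK p q r)) (k : ℕ) :
    ∀ w, M.val p w → M.Forces w (boxIter k (.var r)) := by
  induction k with
  | zero => exact fun w hw => (h w).2 hw
  | succ k ih => exact fun w hw v hv => ih v ((h w).1.2 hw v hv)

/-- **Characterization of the global K-consequences of
φ := (q → p) ∧ (p → □p) ∧ (p → r).** For θ with variables among {q,r},
φ ⊢_K θ iff some finite conjunction ⋀_{k=0}^{N} (q → □^k r) globally entails
θ in K. -/
theorem globalK_consequences_of_phiK (p q r : ℕ)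
    (hpq : p ≠ q) (hpr : p ≠ r) (hqr : q ≠ r)
    (θ : MForm) (hθ : θ.vars ⊆ {q, r}) :
    GlobalK (phiK p q r) θ ↔ ∃ N : ℕ, GlobalK (chainForm q r N) θ := by
  have hpθ : p ∉ θ.vars := fun hp => by
    have := hθ hp
    simp [hpq, hpr] at this
  constructor
  · intro h
    by_contra! hc
    simp only [GlobalK, not_forall] at hc
    choose M hM f hf using hc
    let U := Filter.hyperfilter ℕ
    have hU : ∀ k, ∀ g : (ultraProd U M).W, (ultraProd U M).val q g →
        (ultraProd U M).Forces g (boxIter k (.var r)) := by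
      intro k g hg
      rw [forces_ultraProd]
      have hk : ∀ᶠ n in (U : Filter ℕ), k ≤ n :=
        Filter.Eventually.filter_mono Nat.hyperfilter_le_atTop
          (Filter.eventually_ge_atTop k)
      filter_upwards [hk, hg] with n hn hq
      exact (forces_chainForm (M n) q r n (g n)).1 (hM n (g n)) k hn hq
    have h1 := h ((ultraProd U M).reach p q) (forces_phiK_reach _ hpq hpr hU) f
    replace h1 := (forces_ultraProd U M θ f).1 ((forces_congr (ultraProd U M) p q θ hpθ f).1 h1)
    obtain ⟨n, hn⟩ := h1.exists
    exact hf n hn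
  · rintro ⟨N, h⟩ M hM
    exact h M fun w => (forces_chainForm M q r N w).2 fun k _ hq =>
      forces_boxIter_of_phiK M hM k w ((hM w).1.1 hq)
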